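/- The series ∑_{n=0}^∞ ((1/2)_n (1/4)_n^3 (3/4)_n^3 / ((4/3)_n (5/3)_n (1)_n^5)) · (-16/27)^n · (1376n⁴ + 1808n³ + 784n² + 138n + 9) converges and equals 64/π². -/

import Mathlib

noncomputable def poch (x : ℝ) (n : ℕ) : ℝ := ∏ i ∈ Finset.range n, (x + i)

open Filter Topology Finset

lemma poch_zero (x : ℝ) : poch x 0 = 1 := by simp [poch]

lemma poch_succ (x : ℝ) (n : ℕ) : poch x (n+1) = poch x n * (x + n) := by
  simp [poch, Finset.prod_range_succ]

lemma poch_shift (x : ℝ) (n : ℕ) : poch (x+1) n * x = poch x n * (x + n) := by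
  induction n with
  | zero => simp [poch]
  | succ n ih =>
    rw [poch_succ, poch_succ]
    push_cast
    linear_combination (x + 1 + n) * ih

lemma poch_pos (x : ℝ) (hx : 0 < x) (n : ℕ) : 0 < poch x n := by
  unfold poch
  exact Finset.prod_pos (fun i _ => by positivity)

lemma half_ne (n k : ℕ) : (k : ℝ) - 1/2 - n ≠ 0 := by
  intro h
  have h2 : (2 * (k : ℝ)) = 2 * n + 1 := by linarith
  have h3 : 2 * k = 2 * n + 1 := by exact_mod_cast h2
  omega

/-- coefficient of the series, without the polynomial -/
noncomputable def tt (n : ℕ) : ℝ :=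
  poch (1/2) n * poch (1/4) n ^ 3 * poch (3/4) n ^ 3 /
        (poch (4/3) n * poch (5/3) n * poch 1 n ^ 5) *
        (-16/27 : ℝ) ^ n

noncomputable def PP (n : ℝ) : ℝ := 1376 * n ^ 4 + 1808 * n ^ 3 + 784 * n ^ 2 + 138 * n + 9

noncomputable def rt (n : ℝ) : ℝ :=
  (n+1/2)*(n+1/4)^3*(n+3/4)^3/((n+4/3)*(n+5/3)*(n+1)^5)*(16/27)

lemma tt_succ (n : ℕ) : tt (n+1) = - (tt n * rt n) := by
  have h1 := (poch_pos (4/3) (by norm_num) n).ne'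
  have h2 := (poch_pos (5/3) (by norm_num) n).ne'
  have h3 := (poch_pos 1 (by norm_num) n).ne'
  have h4 : (n:ℝ) + 4/3 ≠ 0 := by positivity
  have h5 : (n:ℝ) + 5/3 ≠ 0 := by positivity
  have h6 : (n:ℝ) + 1 ≠ 0 := by positivity
  have e1 := poch_succ (4/3) n
  have e2 := poch_succ (5/3) n
  have e3 := poch_succ 1 n
  rw [add_comm (4/3 : ℝ)] at e1
  rw [add_comm (5/3 : ℝ)] at e2
  rw [add_comm (1 : ℝ)] at e3
  unfold tt rt
  rw [e1, e2, e3, poch_succ, poch_succ, poch_succ, pow_succ]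
  generalize poch (4/3) n = A at *
  generalize poch (5/3) n = B at *
  generalize poch 1 n = C at *
  generalize (n:ℝ) + 4/3 = D at *
  generalize (n:ℝ) + 5/3 = E at *
  generalize (n:ℝ) + 1 = J at *
  field_simp
  ring

noncomputable def hh (n k : ℕ) : ℝ :=
  tt n / 2 * poch (1/2) k ^ 3 * poch (1/2 - n) k / (poch (n+1) k ^ 3 * poch (2*n+1) k)

lemma hh_succ_k (n k : ℕ) : hh n (k+1) =
    hh n k * (((k:ℝ)+1/2)^3*(k+1/2-n)/((n+k+1)^3*(2*n+k+1))) := by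
  have h1 := (poch_pos ((n:ℝ)+1) (by positivity) k).ne'
  have h2 := (poch_pos (2*(n:ℝ)+1) (by positivity) k).ne'
  have h3 : (n:ℝ) + k + 1 ≠ 0 := by positivity
  have h4 : 2*(n:ℝ) + k + 1 ≠ 0 := by positivity
  have e1 := poch_succ ((n:ℝ)+1) k
  have e2 := poch_succ (2*(n:ℝ)+1) k
  rw [add_right_comm] at e1 e2
  unfold hh
  rw [e1, e2, poch_succ, poch_succ]
  generalize poch ((n:ℝ)+1) k = A at *
  generalize poch (2*(n:ℝ)+1) k = B at *
  generalize poch (1/2-(n:ℝ)) k = C at *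
  field_simp
  ring

lemma hh_succ_n (n k : ℕ) : hh (n+1) k =
    hh n k * (- rt n * ((-1/2-n)/(k-1/2-n)) * ((n+1)^3*((2*n+1)*(2*n+2)))
      /((n+k+1)^3*((2*n+k+1)*(2*n+k+2)))) := by
  have h1 := (poch_pos ((n:ℝ)+1) (by positivity) k).ne'
  have h2 := (poch_pos (2*(n:ℝ)+1) (by positivity) k).ne'
  have h1' := (poch_pos ((n:ℝ)+1+1) (by positivity) k).ne'
  have h2' := (poch_pos (2*(n:ℝ)+1+1+1) (by positivity) k).ne'
  have e1 := poch_shift ((n:ℝ)+1) k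
  have e2 := poch_shift (2*(n:ℝ)+1) k
  have e3 := poch_shift (2*(n:ℝ)+1+1) k
  have e4 := poch_shift (-1/2-(n:ℝ)) k
  rw [show -1/2-(n:ℝ)+1 = 1/2 - n by ring] at e4
  have h5 := half_ne n k
  have f1 : poch ((n:ℝ)+1+1) k = poch ((n:ℝ)+1) k * (n+k+1) / (n+1) := by
    rw [eq_div_iff (by positivity), e1]; ring
  have f2 : poch (2*(n:ℝ)+1+1+1) k = poch (2*(n:ℝ)+1) k * (2*n+k+1) * (2*n+k+2) / ((2*n+1)*(2*n+2)) := by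
    rw [eq_div_iff (by positivity)]
    linear_combination (2*(n:ℝ)+1) * e3 + (2*(n:ℝ)+k+2) * e2
  have f3 : poch (-1/2-(n:ℝ)) k = poch (1/2-(n:ℝ)) k * (-1/2-n)/(k-1/2-n) := by
    rw [eq_div_iff h5]
    linear_combination - e4
  unfold hh
  push_cast
  rw [show 2*((n:ℝ)+1)+1 = 2*n+1+1+1 by ring, show 1/2-((n:ℝ)+1) = -1/2-n by ring, f1, f2, f3,
    tt_succ]
  have h3 : (n:ℝ) + k + 1 ≠ 0 := by positivity
  have h4 : 2*(n:ℝ) + k + 1 ≠ 0 := by positivity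
  have h6 : 2*(n:ℝ) + k + 2 ≠ 0 := by positivity
  have h7 : (n:ℝ) + 1 ≠ 0 := by positivity
  have h8 : 2*(n:ℝ) + 1 ≠ 0 := by positivity
  have h9 : 2*(n:ℝ) + 2 ≠ 0 := by positivity
  generalize poch ((n:ℝ)+1) k = A at *
  generalize poch (2*(n:ℝ)+1) k = B at *
  generalize poch (1/2-(n:ℝ)) k = C at *
  generalize rt (n:ℝ) = R at *
  generalize (k:ℝ)-1/2-n = D at *
  generalize (n:ℝ)+k+1 = E at *
  generalize 2*(n:ℝ)+k+1 = J at *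
  generalize 2*(n:ℝ)+k+2 = K at *
  generalize 2*(n:ℝ)+1 = M at *
  generalize 2*(n:ℝ)+2 = N at *
  generalize -1/2-(n:ℝ) = U at *
  generalize (n:ℝ)+1 = V at *
  field_simp

noncomputable def QQ (n k : ℝ) : ℝ :=
  -(1/64) * (2*n+1)^2 * PP n
  + (-3/8 - 97/16*n - 129/4*n^2 - 76*n^3 - 82*n^4 - 33*n^5) * k
  + (-1/4 + 21/8*n + 57/2*n^2 + 74*n^3 + 57*n^4) * k^2
  + (2 + 19*n + 54*n^2 + 45*n^3) * k^3
  + (2 + 9*n + 9*n^2) * k^4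

noncomputable def FF (n k : ℕ) : ℝ := 3*n*(3*n+1)*(3*n+2)*(1/2+n+2*k) * hh n k

noncomputable def GG (n k : ℕ) : ℝ := hh n k * QQ n k / ((2*n+1+k)*(k-1/2-n))

lemma wz (n k : ℕ) : FF (n+1) k - FF n k = GG n (k+1) - GG n k := by
  unfold FF GG
  rw [hh_succ_k, hh_succ_n]
  have h5 := half_ne n k
  have h5' : (k:ℝ)+1/2-n ≠ 0 := by
    have := half_ne n (k+1)
    push_cast at this
    intro h; apply this; linarith
  have h3 : (n:ℝ) + k + 1 ≠ 0 := by positivity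
  have h4 : 2*(n:ℝ) + k + 1 ≠ 0 := by positivity
  have h6 : 2*(n:ℝ) + k + 2 ≠ 0 := by positivity
  have h7 : (n:ℝ) + 1 ≠ 0 := by positivity
  have h8 : 3*(n:ℝ) + 4 ≠ 0 := by positivity
  have h9 : 3*(n:ℝ) + 5 ≠ 0 := by positivity
  push_cast
  generalize hh n k = X
  generalize (n:ℝ) = n at *
  generalize (k:ℝ) = k at *
  have r1 : 3*(n+1)*(3*(n+1)+1)*(3*(n+1)+2)*(1/2+(n+1)+2*k) * (X * (- rt n * ((-1/2-n)/(k-1/2-n)) * ((n+1)^3*((2*n+1)*(2*n+2)))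
      /((n+k+1)^3*((2*n+k+1)*(2*n+k+2))))) = 
      X * ((n+1/2)^3 * ((2*n+1/2)*(2*n+3/2))^3*(3/2+n+2*k)) / ((n+k+1)^3*((2*n+k+1)*(2*n+k+2)) * (k-1/2-n)) := by
    unfold rt
    rw [show n+4/3 = (3*n+4)/3 by ring, show n+5/3 = (3*n+5)/3 by ring]
    rw [show 3*(n+1)+1 = 3*n+4 by ring, show 3*(n+1)+2 = 3*n+5 by ring]
    generalize k-1/2-n = D at *
    generalize n+k+1 = E at *
    generalize 2*n+k+1 = J at *
    generalize 2*n+k+2 = K at *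
    field_simp
    ring
  have r2 : X * ((k+1/2)^3*(k+1/2-n)/((n+k+1)^3*(2*n+k+1))) * QQ n (k+1) / ((2*n+1+(k+1))*(k+1-1/2-n))
     = X * ((k+1/2)^3 * QQ n (k+1)*(k-1/2-n)) / ((n+k+1)^3*((2*n+k+1)*(2*n+k+2)) * (k-1/2-n)) := by
    rw [show 2*n+1+(k+1) = 2*n+k+2 by ring, show k+1-1/2-n = k+1/2-n by ring]
    generalize QQ n (k+1) = q
    generalize k-1/2-n = D at *
    generalize k+1/2-n = D' at *
    generalize n+k+1 = E at *
    generalize 2*n+k+1 = J at *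
    generalize 2*n+k+2 = K at *
    field_simp
  have r3 : X * QQ n k / ((2*n+1+k)*(k-1/2-n))
     = X * (QQ n k*(n+k+1)^3*(2*n+k+2)) / ((n+k+1)^3*((2*n+k+1)*(2*n+k+2)) * (k-1/2-n)) := by
    rw [show 2*n+1+k = 2*n+k+1 by ring]
    generalize QQ n k = q
    generalize k-1/2-n = D at *
    generalize n+k+1 = E at *
    generalize 2*n+k+1 = J at *
    generalize 2*n+k+2 = K at *
    field_simp
  rw [r1, r2, r3]
  have hD : (n+k+1)^3*((2*n+k+1)*(2*n+k+2)) * (k-1/2-n) ≠ 0 := by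
    refine mul_ne_zero (mul_ne_zero (pow_ne_zero _ h3) (mul_ne_zero h4 h6)) h5
  rw [← sub_div, eq_div_iff hD, sub_mul, div_mul_cancel₀ _ hD]
  unfold QQ PP
  ring

lemma GG_zero (n : ℕ) : GG n 0 = tt n * PP n / 64 := by
  unfold GG hh QQ
  simp only [poch_zero]
  have h := half_ne n 0
  have h8 : 2*(n:ℝ) + 1 ≠ 0 := by positivity
  push_cast at *
  rw [show (0:ℝ)-1/2-n = -(2*n+1)/2 by ring, add_zero]
  generalize PP n = P
  field_simp
  ring

lemma rt_nonneg (n : ℕ) : 0 ≤ rt n := by unfold rt; positivity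

lemma PP_pos (n : ℕ) : 0 < PP n := by unfold PP; positivity

lemma summ : Summable (fun n : ℕ => tt n * PP n) := by
  apply summable_of_ratio_norm_eventually_le (r := 9/10) (by norm_num)
  filter_upwards [eventually_ge_atTop 10] with n hn
  rw [tt_succ, norm_mul, norm_neg, norm_mul, norm_mul, Real.norm_of_nonneg (rt_nonneg n),
    Real.norm_of_nonneg (PP_pos n).le, Real.norm_of_nonneg (PP_pos (n+1)).le]
  have key : rt n * PP (n+1:ℕ) ≤ 9/10 * PP n := by
    obtain ⟨m, rfl⟩ := Nat.exists_eq_add_of_le hn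
    unfold rt PP
    push_cast
    generalize hm : (m:ℝ) = x
    have hx : 0 ≤ x := by rw [← hm]; positivity
    rw [div_mul_eq_mul_div, div_mul_eq_mul_div, div_le_iff₀ (by positivity), ← sub_nonneg]
    ring_nf
    positivity
  calc _ = ‖tt n‖ * (rt n * PP (n+1:ℕ)) := by ring
    _ ≤ ‖tt n‖ * (9/10 * PP n) := by gcongr
    _ = _ := by ring

lemma poch_abs_le (n k : ℕ) : |poch (1/2 - n) k| ≤ poch (2*n+1) k := by
  unfold poch
  rw [Finset.abs_prod]
  apply Finset.prod_le_prod
  · intros; positivity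
  · intro i _
    rw [abs_le]; constructor <;> 
    · have : (0:ℝ) ≤ n := by positivity
      have : (0:ℝ) ≤ i := by positivity
      linarith

lemma poch_half_le (n k : ℕ) (hn : 1 ≤ n) : poch (1/2) k * (k+1) ≤ poch (n+1) k := by
  have hn' : (1:ℝ) ≤ n := by exact_mod_cast hn
  have h := poch_shift 1 k
  calc poch (1/2) k * (k+1) ≤ poch 1 k * (k+1) := by
        gcongr
        unfold poch
        apply Finset.prod_le_prod
        · intros; positivity
        · intros; linarith
    _ = poch (1+1) k := by linarith
    _ ≤ _ := by
        unfold poch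
        apply Finset.prod_le_prod
        · intros; positivity
        · intros; linarith

lemma hh_bound (n k : ℕ) (hn : 1 ≤ n) : |hh n k| ≤ |tt n| / (k+1)^3 := by
  have h1 := poch_pos ((n:ℝ)+1) (by positivity) k
  have h2 := poch_pos (2*(n:ℝ)+1) (by positivity) k
  have h3 := poch_pos (1/2) (by norm_num) k
  have a := poch_abs_le n k
  have b := poch_half_le n k hn
  unfold hh
  rw [abs_div, abs_mul, abs_mul, abs_div, abs_of_pos (show 0 < poch (n+1) k ^ 3 * poch (2*n+1) k by positivity),
    abs_of_pos (show 0 < poch (1/2) k ^3 by positivity), abs_two]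
  rw [div_le_div_iff₀ (by positivity) (by positivity)]
  calc |tt n| / 2 * poch (1/2) k ^ 3 * |poch (1/2 - n) k| * (k+1)^3
      = |tt n| / 2 * ((poch (1/2) k * (k+1))^3 * |poch (1/2 - n) k|) := by ring
    _ ≤ |tt n| * (poch (n+1) k ^ 3 * poch (2*n+1) k) := by
      gcongr
      · linarith [abs_nonneg (tt n)]

lemma FF_bound (n k : ℕ) (hn : 1 ≤ n) : |FF n k| ≤ |tt n * PP n| * (1 / ((k:ℝ)+1)^2) := by
  unfold FF
  rw [abs_mul, abs_mul (tt n), abs_of_pos (PP_pos n),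
    abs_of_nonneg (show (0:ℝ) ≤ 3*n*(3*n+1)*(3*n+2)*(1/2+n+2*k) by positivity)]
  have hb := hh_bound n k hn
  have hn' : (1:ℝ) ≤ n := by exact_mod_cast hn
  have hk : (0:ℝ) ≤ k := by positivity
  have h : 3*(n:ℝ)*(3*n+1)*(3*n+2)*(1/2+n+2*k) ≤ PP n * (k+1) := by
    have h0 : 3*(n:ℝ)*(3*n+1)*(3*n+2)*(1/2+n+2*k) ≤ 3*(n:ℝ)*(3*n+1)*(3*n+2)*((2*n+2)*(k+1)) := by
      gcongr
      nlinarith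
    have h1 : 3*(n:ℝ)*(3*n+1)*(3*n+2)*(2*n+2) ≤ PP n := by
      unfold PP
      rw [← sub_nonneg]
      ring_nf
      positivity
    nlinarith
  calc _ ≤ (PP n * (k+1)) * (|tt n| / (k+1)^3) := by
        have := (PP_pos n).le
        gcongr
    _ = _ := by field_simp

lemma sum2 : Summable (fun k : ℕ => 1 / ((k:ℝ)+1)^2) := by
  have := (summable_nat_add_iff 1).2 (Real.summable_one_div_nat_pow.2 (show 1 < 2 by norm_num))
  simpa using this

lemma FF_zero (k : ℕ) : FF 0 k = 0 := by simp [FF]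

lemma FF_summable (n : ℕ) : Summable (FF n) := by
  rcases Nat.eq_zero_or_pos n with rfl | hn
  · have : FF 0 = fun _ => 0 := funext FF_zero
    rw [this]; exact summable_zero
  · exact Summable.of_norm_bounded (sum2.mul_left _) (fun k => FF_bound n k hn)

noncomputable def SS (n : ℕ) : ℝ := ∑' k, FF n k

lemma SS_tendsto : Tendsto SS atTop (𝓝 0) := by
  have h := summ.tendsto_atTop_zero.abs.mul_const (∑' k : ℕ, 1 / ((k:ℝ)+1)^2)
  rw [abs_zero, zero_mul] at h
  apply squeeze_zero_norm' _ h
  filter_upwards [eventually_ge_atTop 1] with n hn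
  rw [← tsum_mul_left]
  exact tsum_of_norm_bounded (sum2.mul_left _).hasSum (fun k => FF_bound n k hn)

lemma SS_step (n : ℕ) (L : ℝ) (h : Tendsto (GG n) atTop (𝓝 L)) :
    SS (n+1) - SS n = L - tt n * PP n / 64 := by
  have h1 := ((FF_summable (n+1)).hasSum.tendsto_sum_nat).sub ((FF_summable n).hasSum.tendsto_sum_nat)
  have h2 : Tendsto (fun K => GG n K - GG n 0) atTop (𝓝 (L - GG n 0)) := h.sub_const _
  rw [GG_zero] at h2
  refine tendsto_nhds_unique h1 (h2.congr ?_)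
  intro K
  rw [← Finset.sum_sub_distrib, Finset.sum_congr rfl (fun k _ => wz n k), Finset.sum_range_sub,
    GG_zero]

lemma QQ_bound (n k : ℕ) : |QQ n k| ≤ (1000 * (n+1)^6) * ((k:ℝ)+1)^4 := by
  have hn : (0:ℝ) ≤ n := by positivity
  have hk : (0:ℝ) ≤ k := by positivity
  unfold QQ PP
  generalize (n:ℝ) = n at *
  generalize (k:ℝ) = k at *
  rw [abs_le]
  constructor
  · rw [neg_le_iff_add_nonneg]
    ring_nf
    positivity
  · rw [← sub_nonneg]
    ring_nf
    positivity

lemma GG_tendsto_pos (n : ℕ) (hn : 1 ≤ n) : Tendsto (GG n) atTop (𝓝 0) := by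
  have h : Tendsto (fun k : ℕ => (|tt n| * (1000 * (n+1)^6) * 2) * (1 / ((k:ℝ)+1))) atTop (𝓝 0) := by
    have := (tendsto_one_div_add_atTop_nhds_zero_nat (𝕜 := ℝ)).const_mul (|tt n| * (1000 * (n+1)^6) * 2)
    simpa using this
  apply squeeze_zero_norm' _ h
  filter_upwards [eventually_ge_atTop (2*n+2)] with k hk
  have hk' : 2*(n:ℝ)+2 ≤ k := by exact_mod_cast hk
  have hn0 : (0:ℝ) ≤ n := by positivity
  unfold GG
  have p1 : ((k:ℝ)+1)/2 ≤ k-1/2-n := by linarith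
  have p2 : ((k:ℝ)+1) ≤ 2*n+1+k := by linarith
  have p3 : 0 < (k:ℝ)-1/2-n := by linarith
  rw [Real.norm_eq_abs, abs_div, abs_mul, abs_of_pos (show 0 < (2*(n:ℝ)+1+k)*(k-1/2-n) by positivity)]
  calc _ ≤ (|tt n| / (k+1)^3) * ((1000 * (n+1)^6) * ((k:ℝ)+1)^4) / (((k:ℝ)+1) * ((k+1)/2)) := by
        gcongr
        · exact hh_bound n k hn
        · exact QQ_bound n k
    _ = _ := by field_simp

lemma wallis_poch (k : ℕ) : (poch (1/2) k / poch 1 k)^2 * (2*k+1) = (Real.Wallis.W k)⁻¹ := by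
  induction k with
  | zero => simp [poch, Real.Wallis.W]
  | succ k ih =>
    rw [Real.Wallis.W_succ, mul_inv, ← ih, poch_succ, poch_succ]
    have h := (poch_pos 1 (by norm_num) k).ne'
    push_cast
    field_simp
    ring

lemma GG_tendsto_zero : Tendsto (GG 0) atTop (𝓝 (1 / Real.pi^2)) := by
  have hW := (Real.Wallis.tendsto_W_nhds_pi_div_two.inv₀ (by positivity)).pow 2
  have hc : ContinuousAt (fun x : ℝ => (-9/64*x^4 - 3/8*(1-x)*x^3 - 1/4*(1-x)^2*x^2 + 2*(1-x)^3*x + 2*(1-x)^4)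
      / (2*(2-x)^2*(1-3*x/2))) 0 := by
    apply ContinuousAt.div
    · fun_prop
    · fun_prop
    · norm_num
  have hr := hc.tendsto.comp (tendsto_one_div_add_atTop_nhds_zero_nat (𝕜 := ℝ))
  have hm := hW.mul hr
  have e : ((Real.pi / 2)⁻¹)^2 * ((-9/64*(0:ℝ)^4 - 3/8*(1-0)*0^3 - 1/4*(1-0)^2*0^2 + 2*(1-0)^3*0 + 2*(1-0)^4)
      / (2*(2-0)^2*(1-3*0/2))) = 1 / Real.pi^2 := by
    have := Real.pi_ne_zero
    field_simp
    norm_num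
  rw [e] at hm
  refine hm.congr ?_
  intro k
  have h5 : (k:ℝ) - 1/2 ≠ 0 := by simpa using half_ne 0 k
  have h6 : (k:ℝ) + 1 ≠ 0 := by positivity
  have h7 : 2*(k:ℝ) + 1 ≠ 0 := by positivity
  rw [← wallis_poch]
  have hp := (poch_pos 1 (by norm_num) k).ne'
  have hh0 : hh 0 k = 1/2 * (poch (1/2) k / poch 1 k)^4 := by
    unfold hh
    have : tt 0 = 1 := by simp [tt, poch_zero]
    rw [this]
    simp only [Nat.cast_zero, sub_zero, zero_add, mul_zero]
    field_simp
  unfold GG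
  rw [hh0]
  generalize poch (1/2) k / poch 1 k = u
  unfold QQ PP
  simp only [Function.comp, Nat.cast_zero]
  generalize (k:ℝ) = k at *
  have g1 : 1 - 1/(k+1) = k/(k+1) := by field_simp; ring
  have g2 : 2 - 1/(k+1) = (2*k+1)/(k+1) := by field_simp; ring
  have g3 : 1 - 3*(1/(k+1))/2 = (k-1/2)/(k+1) := by field_simp; ring
  rw [g1, g2, g3, show 2*0+1+k = k+1 by ring, sub_zero]
  generalize hd : k - 1/2 = d at *
  field_simp
  ring

theorem stmt1 :
    HasSum (fun n : ℕ =>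
      poch (1/2) n * poch (1/4) n ^ 3 * poch (3/4) n ^ 3 /
        (poch (4/3) n * poch (5/3) n * poch 1 n ^ 5) *
        (-16/27 : ℝ) ^ n *
        (1376 * (n : ℝ) ^ 4 + 1808 * n ^ 3 + 784 * n ^ 2 + 138 * n + 9))
      (64 / Real.pi ^ 2) := by
  change HasSum (fun n : ℕ => tt n * PP n) _
  rw [summ.hasSum_iff_tendsto_nat]
  have key : ∀ N : ℕ, ∑ n ∈ range (N+1), tt n * PP n = 64 / Real.pi^2 - 64 * SS (N+1) := by
    intro N
    induction N with
    | zero =>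
      have h := SS_step 0 _ GG_tendsto_zero
      have h0 : SS 0 = 0 := by simp [SS, FF_zero]
      rw [h0] at h
      simp only [zero_add, sum_range_one] at *
      rw [show 64 / Real.pi^2 = 64 * (1/Real.pi^2) by ring]
      linarith
    | succ N ih =>
      have h := SS_step (N+1) _ (GG_tendsto_pos (N+1) (by omega))
      rw [sum_range_succ, ih]
      linarith
  rw [← tendsto_add_atTop_iff_nat 1]
  simp_rw [key]
  have := ((tendsto_add_atTop_iff_nat 1).2 SS_tendsto).const_mul 64 |>.const_sub (64 / Real.pi^2)
  simpa using this
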